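/- Let λ be the partition associated to a gap sequence G of genus g, and let 0 ≤ k ≤ g (with the conventions that the empty derivative is the identity when k = g, and s_∅ = 1 when k = 0). Then ∂_{a^{(k)}_1}⋯∂_{a^{(k)}_{m_k}} s_λ(t), evaluated at t = [x_1]+⋯+[x_k], equals c_k · s_{(λ_1,...,λ_k)}([x_1]+⋯+[x_k]), where c_k ∈ {±1} is the sign of the permutation of (g−k−1, ..., 1, 0) given by the tuple (w_1^*, ..., w_{m_k}^*, w_{g−k−m_k}, w_{g−k−m_k−1}, ..., w_1), and c_g = 1. -/

import Mathlib

open MvPolynomial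

/-- The polynomial `p_n(t)` defined by `exp(Σ_{n≥1} t_n k^n) = Σ_{n≥0} p_n(t) k^n`,
as a polynomial in the variables `t_1, t_2, ...` (variable `X n` stands for `t_n`). -/
noncomputable def pS (n : ℕ) : MvPolynomial ℕ ℚ :=
  ∑ m ∈ Finset.range (n + 1), (Nat.factorial m : ℚ)⁻¹ •
    ∑ c ∈ Finset.univ.filter
        (fun c : Fin m → Fin (n + 1) =>
          (∑ j, ((c j : ℕ))) = n ∧ ∀ j, 1 ≤ (c j : ℕ)),
      ∏ j, X ((c j : ℕ))

/-- `p_n` for `n : ℤ`, with `p_n = 0` for `n < 0`. -/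
noncomputable def pz (n : ℤ) : MvPolynomial ℕ ℚ :=
  if 0 ≤ n then pS n.toNat else 0

/-- The Schur function `s_λ(t) = det(p_{λ_i - i + j})_{1 ≤ i,j ≤ l}` (here `0`-indexed). -/
noncomputable def schur {l : ℕ} (lam : Fin l → ℕ) : MvPolynomial ℕ ℚ :=
  Matrix.det (Matrix.of fun a b : Fin l =>
    pz ((lam a : ℤ) - ((a : ℕ) : ℤ) + ((b : ℕ) : ℤ)))

/-- Substitution `t_n ↦ (x_1^n + ⋯ + x_k^n)/n`, i.e. `t = [x_1] + ⋯ + [x_k]`. -/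
noncomputable def toPowerSums (k : ℕ) (f : MvPolynomial ℕ ℚ) : MvPolynomial (Fin k) ℚ :=
  aeval (fun n : ℕ => (n : ℚ)⁻¹ • ∑ i : Fin k, X i ^ n) f

/-- Iterated partial derivative `∂_{i_1} ⋯ ∂_{i_r}` for a list `L = [i_1, ..., i_r]`. -/
noncomputable def derivs (L : List ℕ) (f : MvPolynomial ℕ ℚ) : MvPolynomial ℕ ℚ :=
  L.foldr (fun i g => pderiv i g) f

/-- The entries of a partition `λ` padded by zeros (`0`-indexed). -/
def pad {l : ℕ} (lam : Fin l → ℕ) (a : ℕ) : ℕ := if h : a < l then lam ⟨a, h⟩ else 0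

/-- `w_i`: the `(i+1)`-st smallest element of `G` (0-indexed: `wseq G 0 = w_1`). -/
def wseq (G : Finset ℕ) (i : ℕ) : ℕ := (G.sort (· ≤ ·)).getD i 0

/-- `w_i^*`: the `(i+1)`-st smallest element of the complement of `G`
(0-indexed: `wstar G 0 = w_1^* = 0`). -/
noncomputable def wstar (G : Finset ℕ) (i : ℕ) : ℕ := Nat.nth (fun n => n ∉ G) i

/-- `m_k = #{i : w_i^* < g - k}`, the number of non-gaps below `g - k`. -/
def gapm (G : Finset ℕ) (g k : ℕ) : ℕ :=
  ((Finset.range (g - k)).filter (fun n => n ∉ G)).card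

/-- `a^{(k)}_{j+1} = w_{g-k-j} - w_{j+1}^*` (0-indexed in `j`, `0 ≤ j < m_k`). -/
noncomputable def gapa (G : Finset ℕ) (g k j : ℕ) : ℕ :=
  wseq G (g - k - j - 1) - wstar G j

/-- The partition associated to the gap sequence `G`:
`λ = (w_g, ..., w_1) - (g-1, ..., 1, 0)`, i.e. `λ_{a+1} = w_{g-a} - (g-1-a)` (0-indexed `a`). -/
def gapPart (G : Finset ℕ) (g a : ℕ) : ℕ := wseq G (g - 1 - a) - (g - 1 - a)

/-- The series `Σ_{n≥1} t_n z^n`. -/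
noncomputable def timeSeries : PowerSeries (MvPolynomial ℕ ℚ) :=
  PowerSeries.mk fun n => if n = 0 then 0 else X n

/-- The series `Σ_{n≥0} p_n z^n`. -/
noncomputable def schurSeries : PowerSeries (MvPolynomial ℕ ℚ) := PowerSeries.mk pS

theorem coeff_timeSeries_pow (m n : ℕ) :
    PowerSeries.coeff n (timeSeries ^ m) =
      ∑ c ∈ Finset.univ.filter
        (fun c : Fin m → Fin (n + 1) => (∑ j, ((c j : ℕ))) = n ∧ ∀ j, 1 ≤ (c j : ℕ)),
        ∏ j, (X ((c j : ℕ)) : MvPolynomial ℕ ℚ) := by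
  have h1 : PowerSeries.trunc (n + 1) timeSeries =
      ∑ i : Fin (n + 1), Polynomial.monomial (i : ℕ)
        (if (i : ℕ) = 0 then 0 else (X (i : ℕ) : MvPolynomial ℕ ℚ)) := by
    ext1 d
    rw [PowerSeries.coeff_trunc, Fin.sum_univ_eq_sum_range (fun i => Polynomial.monomial i
        (if i = 0 then 0 else (X i : MvPolynomial ℕ ℚ))), Polynomial.finsetSum_coeff]
    simp [Polynomial.coeff_monomial, timeSeries]
  have h2 := congrArg (fun f => Polynomial.coeff f n)
    (PowerSeries.trunc_trunc_pow timeSeries (n + 1) m)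
  simp only [PowerSeries.coeff_trunc, Nat.lt_succ_self, if_true, h1] at h2
  rw [← h2, ← Polynomial.coe_pow, Polynomial.coeff_coe, Finset.sum_pow', Fintype.piFinset_univ,
    Polynomial.finsetSum_coeff, Finset.sum_filter]
  refine Finset.sum_congr rfl fun c _ => ?_
  have h3 : ∏ j, Polynomial.monomial (c j : ℕ)
        (if (c j : ℕ) = 0 then 0 else (X (c j : ℕ) : MvPolynomial ℕ ℚ)) =
      Polynomial.monomial (∑ j, (c j : ℕ))
        (∏ j, if (c j : ℕ) = 0 then 0 else (X (c j : ℕ) : MvPolynomial ℕ ℚ)) := by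
    simp only [← Polynomial.C_mul_X_pow_eq_monomial, Finset.prod_mul_distrib, map_prod,
      Finset.prod_pow_eq_pow_sum]
  rw [h3, Polynomial.coeff_monomial, ite_and]
  refine if_congr Iff.rfl ?_ rfl
  split_ifs with h4
  · exact Finset.prod_congr rfl fun j _ => if_neg (by have := h4 j; omega)
  · push Not at h4
    obtain ⟨j, hj⟩ := h4
    exact Finset.prod_eq_zero (Finset.mem_univ j) (if_pos (by omega))

theorem coeff_timeSeries_pow_eq_zero {m n : ℕ} (h : n < m) :
    PowerSeries.coeff n (timeSeries ^ m) = 0 := by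
  have hX : (PowerSeries.X : PowerSeries (MvPolynomial ℕ ℚ)) ∣ timeSeries := by
    rw [PowerSeries.X_dvd_iff]; simp [timeSeries]
  exact PowerSeries.X_pow_dvd_iff.mp (pow_dvd_pow_of_dvd hX m) n h

theorem pS_eq_sum {n N : ℕ} (h : n < N) :
    pS n = ∑ m ∈ Finset.range N,
      (Nat.factorial m : ℚ)⁻¹ • PowerSeries.coeff n (timeSeries ^ m) := by
  have h1 : pS n = ∑ m ∈ Finset.range (n + 1),
      (Nat.factorial m : ℚ)⁻¹ • PowerSeries.coeff n (timeSeries ^ m) := by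
    simp only [pS, coeff_timeSeries_pow]
  rw [h1]
  refine Finset.sum_subset (by simpa using h) fun m _ hm => ?_
  rw [coeff_timeSeries_pow_eq_zero (by simpa using hm), smul_zero]

theorem derivative_schurSeries :
    PowerSeries.derivative (MvPolynomial ℕ ℚ) schurSeries =
      schurSeries * PowerSeries.derivative (MvPolynomial ℕ ℚ) timeSeries := by
  ext1 n
  rw [PowerSeries.coeff_mul]
  have h1 : ∀ p ∈ Finset.HasAntidiagonal.antidiagonal n,
      PowerSeries.coeff p.1 schurSeries = ∑ m ∈ Finset.range (n + 1),
      (Nat.factorial m : ℚ)⁻¹ • PowerSeries.coeff p.1 (timeSeries ^ m) := by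
    intro p hp
    rw [schurSeries, PowerSeries.coeff_mk]
    exact pS_eq_sum (by have := Finset.HasAntidiagonal.antidiagonal.fst_le hp; omega)
  rw [Finset.sum_congr rfl fun p hp => by rw [h1 p hp]]
  simp only [Finset.sum_mul, smul_mul_assoc]
  rw [Finset.sum_comm, PowerSeries.coeff_derivative, schurSeries, PowerSeries.coeff_mk,
    pS_eq_sum (Nat.lt_succ_self (n + 1)), Finset.sum_range_succ']
  simp only [← Finset.smul_sum, ← PowerSeries.coeff_mul]
  rw [add_mul, Finset.sum_mul]
  have h0 : PowerSeries.coeff (n + 1) (timeSeries ^ 0) = 0 := by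
    simp [PowerSeries.coeff_one]
  rw [h0, smul_zero, zero_mul, add_zero]
  refine Finset.sum_congr rfl fun m _ => ?_
  have h2 := congrArg (PowerSeries.coeff n)
    (PowerSeries.derivative_pow (R := MvPolynomial ℕ ℚ) timeSeries (m + 1))
  rw [PowerSeries.coeff_derivative] at h2
  rw [smul_mul_assoc, h2, add_tsub_cancel_right, mul_assoc, ← nsmul_eq_mul,
    map_nsmul, ← Nat.cast_smul_eq_nsmul ℚ, smul_smul, Nat.factorial_succ]
  congr 1
  push_cast
  field_simp

theorem eq_zero_of_derivative_eq_mul {R : Type*} [CommRing R] [IsDomain R] [CharZero R]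
    {E A : PowerSeries R} (h0 : PowerSeries.constantCoeff E = 0)
    (h : PowerSeries.derivative R E = E * A) : E = 0 := by
  ext n
  induction n using Nat.strong_induction_on with
  | _ n ih =>
    cases n with
    | zero => simpa using h0
    | succ n =>
      have h1 := congrArg (PowerSeries.coeff n) h
      rw [PowerSeries.coeff_derivative, PowerSeries.coeff_mul, Finset.sum_eq_zero] at h1
      · have : ((n : R) + 1) ≠ 0 := by exact_mod_cast Nat.succ_ne_zero n
        simpa [this] using h1
      · intro p hp
        rw [ih p.1 (by have := Finset.HasAntidiagonal.antidiagonal.fst_le hp; omega)]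
        simp

theorem pS_zero : pS 0 = 1 := by
  rw [pS_eq_sum (Nat.lt_succ_self 0)]
  simp

theorem pderiv_pS {i : ℕ} (hi : i ≠ 0) (n : ℕ) :
    pderiv i (pS n) = if i ≤ n then pS (n - i) else 0 := by
  have key : PowerSeries.mk (fun n => pderiv i (pS n)) - PowerSeries.X ^ i * schurSeries = 0 := by
    refine eq_zero_of_derivative_eq_mul
      (A := PowerSeries.derivative (MvPolynomial ℕ ℚ) timeSeries) ?_ ?_
    · rw [← PowerSeries.coeff_zero_eq_constantCoeff_apply]
      simp [pS_zero, hi]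
    · have h1 : PowerSeries.derivative _ (PowerSeries.mk (fun n => pderiv i (pS n))) =
          PowerSeries.mk (fun n => pderiv i (pS n)) *
            PowerSeries.derivative (MvPolynomial ℕ ℚ) timeSeries +
          schurSeries * PowerSeries.derivative _ (PowerSeries.X ^ i) := by
        ext1 n
        have h2 := congrArg (fun f => pderiv i (PowerSeries.coeff n f)) derivative_schurSeries
        simp only [PowerSeries.coeff_derivative, PowerSeries.coeff_mul, map_sum,
          Derivation.leibniz, schurSeries, PowerSeries.coeff_mk, map_add, smul_eq_mul,
          Derivation.map_natCast, Derivation.map_one_eq_zero, timeSeries, Nat.succ_ne_zero,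
          if_false, pderiv_X, add_zero, mul_zero, zero_add] at h2 ⊢
        rw [mul_comm, h2, ← Finset.sum_add_distrib]
        refine Finset.sum_congr rfl fun x _ => ?_
        rw [PowerSeries.coeff_X_pow, Pi.single_apply]
        ring
      rw [map_sub, Derivation.leibniz, h1, derivative_schurSeries]
      simp only [smul_eq_mul]
      ring
  have h2 := congrArg (PowerSeries.coeff n) (sub_eq_zero.mp key)
  rw [PowerSeries.coeff_mk, PowerSeries.coeff_X_pow_mul'] at h2
  simpa [schurSeries] using h2

theorem pderiv_pz {i : ℕ} (hi : i ≠ 0) (n : ℤ) : pderiv i (pz n) = pz (n - i) := by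
  unfold pz
  split_ifs with h1 h2 h2
  · rw [pderiv_pS hi, if_pos (by omega)]
    congr 1
    omega
  · rw [pderiv_pS hi, if_neg (by omega)]
  · omega
  · simp

/-- The substitution `t = [x_1] + ⋯ + [x_k]` as an algebra homomorphism. -/
noncomputable def toPowerSumsHom (k : ℕ) : MvPolynomial ℕ ℚ →ₐ[ℚ] MvPolynomial (Fin k) ℚ :=
  aeval (fun n : ℕ => (n : ℚ)⁻¹ • ∑ i : Fin k, X i ^ n)

theorem toPowerSums_eq (k : ℕ) (f : MvPolynomial ℕ ℚ) :
    toPowerSums k f = toPowerSumsHom k f := rfl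

theorem derivative_prod_one_sub {R ι : Type*} [CommRing R] [DecidableEq ι] (s : Finset ι)
    (x : ι → R) :
    PowerSeries.derivative R (∏ i ∈ s, (1 - PowerSeries.C (x i) * PowerSeries.X)) =
      -((∏ i ∈ s, (1 - PowerSeries.C (x i) * PowerSeries.X)) *
        PowerSeries.mk fun n => ∑ i ∈ s, x i ^ (n + 1)) := by
  induction s using Finset.induction_on with
  | empty =>
    have : (PowerSeries.mk fun n => (0 : R)) = 0 := rfl
    simp [this]
  | insert a s ha ih =>
    rw [Finset.prod_insert ha, Derivation.leibniz, ih]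
    have h1 : (PowerSeries.mk fun n => ∑ i ∈ insert a s, x i ^ (n + 1)) =
        (PowerSeries.mk fun n => x a ^ (n + 1)) + PowerSeries.mk fun n => ∑ i ∈ s, x i ^ (n + 1) := by
      ext n
      simp [Finset.sum_insert ha]
    have h2 : (1 - PowerSeries.C (x a) * PowerSeries.X) * (PowerSeries.mk fun n => x a ^ (n + 1)) =
        PowerSeries.C (x a) := by
      ext n
      rw [sub_mul, one_mul, mul_assoc, map_sub, PowerSeries.coeff_C_mul]
      cases n with
      | zero => simp
      | succ n => simp [PowerSeries.coeff_succ_X_mul, pow_succ']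
    have h3 : PowerSeries.derivative R (1 - PowerSeries.C (x a) * PowerSeries.X) =
        -PowerSeries.C (x a) := by
      simp [Derivation.leibniz]
    rw [h1, h3]
    simp only [smul_eq_mul]
    linear_combination (∏ i ∈ s, (1 - PowerSeries.C (x i) * PowerSeries.X)) * h2

/-- The polynomial `∏ (1 - x_i z)`, whose coefficients are the signed elementary symmetric
polynomials. -/
noncomputable def signedEsymm (k : ℕ) : Polynomial (MvPolynomial (Fin k) ℚ) :=
  ∏ i : Fin k, (1 - Polynomial.C (X i) * Polynomial.X)

theorem natDegree_signedEsymm_le (k : ℕ) : (signedEsymm k).natDegree ≤ k := by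
  refine (Polynomial.natDegree_prod_le _ _).trans ?_
  refine (Finset.sum_le_card_nsmul _ _ 1 fun i _ => ?_).trans (by simp)
  compute_degree

theorem coeff_zero_signedEsymm (k : ℕ) : (signedEsymm k).coeff 0 = 1 := by
  rw [Polynomial.coeff_zero_eq_eval_zero, signedEsymm, Polynomial.eval_prod]
  simp

theorem signedEsymm_mul_schurSeries (k : ℕ) :
    (signedEsymm k : PowerSeries (MvPolynomial (Fin k) ℚ)) *
      PowerSeries.map (toPowerSumsHom k : MvPolynomial ℕ ℚ →+* MvPolynomial (Fin k) ℚ)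
        schurSeries = 1 := by
  have hE : (signedEsymm k : PowerSeries (MvPolynomial (Fin k) ℚ)) =
      ∏ i : Fin k, (1 - PowerSeries.C (X i) * PowerSeries.X) := by
    rw [signedEsymm, ← Polynomial.coeToPowerSeries.ringHom_apply, map_prod]
    simp
  have hd : ∀ f : PowerSeries (MvPolynomial ℕ ℚ),
      PowerSeries.derivative _ (PowerSeries.map
        (toPowerSumsHom k : MvPolynomial ℕ ℚ →+* MvPolynomial (Fin k) ℚ) f) =
      PowerSeries.map (toPowerSumsHom k : MvPolynomial ℕ ℚ →+* MvPolynomial (Fin k) ℚ)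
        (PowerSeries.derivative _ f) := by
    intro f
    ext1 n
    simp [PowerSeries.coeff_derivative]
  have hT : PowerSeries.map (toPowerSumsHom k : MvPolynomial ℕ ℚ →+* MvPolynomial (Fin k) ℚ)
      (PowerSeries.derivative _ timeSeries) =
      PowerSeries.mk fun n => ∑ i : Fin k, (X i : MvPolynomial (Fin k) ℚ) ^ (n + 1) := by
    ext1 n
    have hn : ((n : ℚ) + 1) ≠ 0 := by positivity
    have hc : ((n : MvPolynomial (Fin k) ℚ) + 1) = MvPolynomial.C ((n : ℚ) + 1) := by simp
    simp only [PowerSeries.coeff_map, PowerSeries.coeff_derivative, timeSeries,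
      PowerSeries.coeff_mk, Nat.succ_ne_zero, if_false, toPowerSumsHom, map_mul, map_add,
      map_natCast, map_one, RingHom.coe_coe, aeval_X]
    rw [hc, mul_comm, ← MvPolynomial.smul_eq_C_mul, smul_smul]
    push_cast
    rw [mul_inv_cancel₀ hn, one_smul]
  apply PowerSeries.derivative.ext
  · rw [Derivation.leibniz, hd, derivative_schurSeries, map_mul, hT, hE,
      derivative_prod_one_sub]
    simp only [smul_eq_mul, PowerSeries.derivative_one]
    ring
  · rw [map_mul, ← PowerSeries.coeff_zero_eq_constantCoeff_apply,
      ← PowerSeries.coeff_zero_eq_constantCoeff_apply, Polynomial.coeff_coe,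
      coeff_zero_signedEsymm]
    simp [schurSeries, pS_zero]

theorem sum_signedEsymm_mul_pz (k : ℕ) {B : ℕ} (hB : k ≤ B) (N : ℤ) :
    ∑ i ∈ Finset.range (B + 1), (signedEsymm k).coeff i * toPowerSumsHom k (pz (N - i)) =
      if N = 0 then 1 else 0 := by
  rcases lt_or_ge N 0 with hN | hN
  · rw [if_neg hN.ne]
    refine Finset.sum_eq_zero fun i _ => ?_
    rw [pz, if_neg (by omega), map_zero, mul_zero]
  lift N to ℕ using hN
  have h := congrArg (PowerSeries.coeff N) (signedEsymm_mul_schurSeries k)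
  rw [PowerSeries.coeff_mul, Finset.Nat.sum_antidiagonal_eq_sum_range_succ_mk,
    PowerSeries.coeff_one] at h
  simp only [Nat.cast_eq_zero]
  rw [← h]
  trans ∑ i ∈ Finset.range (B + N + 1),
    (signedEsymm k).coeff i * toPowerSumsHom k (pz ((N : ℤ) - i))
  · refine Finset.sum_subset (Finset.range_subset_range.2 (by omega)) fun i _ hi => ?_
    rw [Polynomial.coeff_eq_zero_of_natDegree_lt, zero_mul]
    have := natDegree_signedEsymm_le k
    simp at hi
    omega
  · symm
    refine Finset.sum_subset_zero_on_sdiff (Finset.range_subset_range.2 (by omega))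
      (fun i hi => ?_) fun i hi => ?_
    · simp only [Finset.mem_sdiff, Finset.mem_range] at hi
      rw [pz, if_neg (by omega), map_zero, mul_zero]
    · simp only [Finset.mem_range] at hi
      rw [pz, if_pos (by omega)]
      simp only [Polynomial.coeff_coe, PowerSeries.coeff_map, schurSeries, PowerSeries.coeff_mk,
        RingHom.coe_coe]
      congr 3
      omega

/-- The determinant `det(p_{v_a - (g - 1) + b})` attached to the charges `v_a`; for
`v_a = λ_a + (g - 1 - a)` it is the Schur function `s_λ`. -/
noncomputable def chargeDet {g : ℕ} (v : Fin g → ℤ) : MvPolynomial ℕ ℚ :=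
  Matrix.det (Matrix.of fun a b : Fin g => pz (v a + 1 - g + (b : ℕ)))

theorem toPowerSumsHom_chargeDet_eq_zero {g k r : ℕ} (hr : k + r < g) (v : Fin g → ℤ)
    (hv : ∀ a, v a ≠ r) : toPowerSumsHom k (chargeDet v) = 0 := by
  rw [chargeDet, AlgHom.map_det, ← Matrix.exists_mulVec_eq_zero_iff]
  obtain ⟨c, hc⟩ : ∃ c, g = c + 1 + r := ⟨g - 1 - r, by omega⟩
  refine ⟨fun b => if (b : ℕ) < c + 1 then (signedEsymm k).coeff (c - b) else 0, fun h => ?_, ?_⟩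
  · have := congrFun h ⟨c, by omega⟩
    simp [coeff_zero_signedEsymm] at this
  · ext1 a
    simp only [Matrix.mulVec, dotProduct, AlgHom.mapMatrix_apply, Matrix.map_apply,
      Matrix.of_apply, Pi.zero_apply]
    rw [Fin.sum_univ_eq_sum_range (fun b => toPowerSumsHom k (pz (v a + 1 - g + b)) *
      if b < c + 1 then (signedEsymm k).coeff (c - b) else 0)]
    have h := sum_signedEsymm_mul_pz k (show k ≤ c by omega) (v a - r)
    rw [if_neg (sub_ne_zero.2 (hv a)), ← Finset.sum_range_reflect] at h
    refine Eq.trans (Eq.symm ?_) h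
    refine Finset.sum_subset_zero_on_sdiff (Finset.range_subset_range.2 (by omega))
      (fun b hb => ?_) fun b hb => ?_
    · simp only [Finset.mem_sdiff, Finset.mem_range] at hb
      rw [if_neg hb.2, mul_zero]
    · simp only [Finset.mem_range] at hb
      rw [if_pos hb, mul_comm, add_tsub_cancel_right]
      congr 3
      omega

theorem derivation_prod {R A ι : Type*} [CommSemiring R] [CommSemiring A] [Algebra R A]
    [DecidableEq ι] (D : Derivation R A A) (s : Finset ι) (f : ι → A) :
    D (∏ j ∈ s, f j) = ∑ i ∈ s, ∏ j ∈ s, Function.update f i (D (f i)) j := by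
  induction s using Finset.induction_on with
  | empty => simp
  | insert a s ha ih =>
    rw [Finset.prod_insert ha, Derivation.leibniz, ih, Finset.sum_insert ha,
      Finset.prod_insert ha, Function.update_self, smul_eq_mul, smul_eq_mul, Finset.mul_sum,
      add_comm, mul_comm]
    congr 1
    · congr 1
      refine Finset.prod_congr rfl fun j hj => ?_
      rw [Function.update_of_ne (ne_of_mem_of_not_mem hj ha)]
    · refine Finset.sum_congr rfl fun i hi => ?_
      rw [Finset.prod_insert ha, Function.update_of_ne (ne_of_mem_of_not_mem hi ha).symm]

theorem pderiv_chargeDet {g i : ℕ} (hi : i ≠ 0) (v : Fin g → ℤ) :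
    pderiv i (chargeDet v) = ∑ a, chargeDet (v - Pi.single a (i : ℤ)) := by
  simp only [chargeDet, Matrix.det_apply, map_sum]
  rw [Finset.sum_comm]
  refine Finset.sum_congr rfl fun σ _ => ?_
  rw [← Finset.smul_sum, Units.smul_def, Units.smul_def, map_zsmul, derivation_prod]
  congr 1
  refine Eq.trans ?_ (Equiv.sum_comp σ _)
  refine Finset.sum_congr rfl fun b _ => Finset.prod_congr rfl fun j _ => ?_
  by_cases h : j = b
  · subst h
    simp only [Function.update_self, Matrix.of_apply, pderiv_pz hi, Pi.sub_apply,
      Pi.single_eq_same]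
    congr 1
    ring
  · simp [Function.update_of_ne h, Pi.single_eq_of_ne (σ.injective.ne h)]

theorem derivs_range_chargeDet {g : ℕ} (m : ℕ) (a : ℕ → ℕ) (ha : ∀ j < m, a j ≠ 0)
    (v : Fin g → ℤ) :
    derivs ((List.range m).map a) (chargeDet v) =
      ∑ f : Fin m → Fin g, chargeDet (v - ∑ j, Pi.single (f j) (a j : ℤ)) := by
  induction m generalizing v with
  | zero => simp [derivs]
  | succ m ih =>
    have hadd : ∀ (L : List ℕ) (s : Finset (Fin g)) (F : Fin g → MvPolynomial ℕ ℚ),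
        derivs L (∑ r ∈ s, F r) = ∑ r ∈ s, derivs L (F r) := by
      intro L s F
      induction L with
      | nil => rfl
      | cons i L ihL =>
        simp only [derivs, List.foldr_cons] at ihL ⊢
        rw [ihL, map_sum]
    have happ : derivs ((List.range (m + 1)).map a) (chargeDet v) =
        derivs ((List.range m).map a) (pderiv (a m) (chargeDet v)) := by
      simp [derivs, List.range_succ]
    rw [happ, pderiv_chargeDet (ha m (Nat.lt_succ_self m)), hadd,
      ← (Fin.snocEquiv fun _ => Fin g).sum_comp, Fintype.sum_prod_type]
    refine Finset.sum_congr rfl fun r _ => ?_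
    rw [ih fun j hj => ha j (by omega)]
    refine Finset.sum_congr rfl fun f _ => ?_
    rw [Fin.sum_univ_castSucc]
    simp [Fin.snocEquiv, sub_sub, add_comm]

theorem schur_eq_chargeDet {g : ℕ} (lam : Fin g → ℕ) :
    schur lam = chargeDet fun a => (lam a : ℤ) + (g - 1 - (a : ℕ)) := by
  unfold schur chargeDet
  congr! 4
  dsimp only
  congr 1
  ring

theorem chargeDet_eq_sign_smul {k n : ℕ} (lam : ℕ → ℕ) (π : Equiv.Perm (Fin n))
    (v : Fin (k + n) → ℤ)
    (hv₁ : ∀ a : Fin k, v (Fin.castAdd n a) = (lam a : ℤ) + (k + n - 1 - (a : ℕ)))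
    (hv₂ : ∀ j : Fin n, v (Fin.natAdd k j) = (n : ℤ) - 1 - (π j : ℕ)) :
    chargeDet v = ((Equiv.Perm.sign π : ℤ) : ℚ) • schur (fun a : Fin k => lam a) := by
  have hblock : (Matrix.of fun a b : Fin (k + n) =>
      pz (v a + 1 - (k + n : ℕ) + (b : ℕ))).submatrix finSumFinEquiv finSumFinEquiv =
      Matrix.fromBlocks
        (Matrix.of fun a b : Fin k => pz ((lam a : ℤ) - ((a : ℕ) : ℤ) + ((b : ℕ) : ℤ)))
        (Matrix.of fun (a : Fin k) (b : Fin n) =>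
          pz (v (Fin.castAdd n a) + 1 - (k + n : ℕ) + (k + b : ℕ)))
        0
        ((Matrix.of fun a b : Fin n => pz ((b : ℕ) - (a : ℕ) : ℤ)).submatrix π id) := by
    ext1 a b
    rcases a with a | a <;> rcases b with b | b
    · simp only [Matrix.submatrix_apply, finSumFinEquiv_apply_left, Matrix.of_apply, hv₁,
        Matrix.fromBlocks_apply₁₁, Fin.val_castAdd]
      congr 1
      push_cast
      ring
    · simp
    · simp only [Matrix.submatrix_apply, finSumFinEquiv_apply_left, finSumFinEquiv_apply_right,
        Matrix.of_apply, hv₂, Matrix.fromBlocks_apply₂₁, Fin.val_castAdd, Matrix.zero_apply]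
      rw [pz, if_neg (by have := b.2; omega)]
    · simp only [Matrix.submatrix_apply, finSumFinEquiv_apply_right, Matrix.of_apply, hv₂,
        Matrix.fromBlocks_apply₂₂, Fin.val_natAdd, id]
      congr 1
      push_cast
      ring
  have htri : (Matrix.of fun a b : Fin n => pz ((b : ℕ) - (a : ℕ) : ℤ)).det = 1 := by
    rw [Matrix.det_of_isUpperTriangular]
    · simp [pz, pS_zero]
    · intro a b hab
      have : b < a := hab
      rw [Matrix.of_apply, pz, if_neg (by omega)]
  rw [chargeDet, ← Matrix.det_submatrix_equiv_self finSumFinEquiv, hblock,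
    Matrix.det_fromBlocks_zero₂₁, Matrix.det_permute, htri, mul_one, mul_comm, schur,
    ← zsmul_eq_mul, Int.cast_smul_eq_zsmul]

/-- The combinatorial core: if lowering the charges `w` by the amounts `w_{n-1-j} - s_j` in rows
`f j` produces every value below `n`, then row `f j` must be the one of charge `w_{n-1-j}`. -/
theorem row_eq_of_forall_lt_attained {g n m : ℕ} (G : Finset ℕ) (w s : ℕ → ℕ)
    (hmn : m ≤ n) (hng : n ≤ g)
    (hw : ∀ i j, i < j → j < g → w i < w j) (hwG : ∀ i < g, w i ∈ G)
    (hlow : ∀ i < n - m, w i < n) (hhigh : ∀ i, n - m ≤ i → i < g → n ≤ w i)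
    (hs : ∀ i j, i < j → j < m → s i < s j) (hsn : ∀ j < m, s j < n) (hsG : ∀ j < m, s j ∉ G)
    (f : Fin m → Fin g)
    (h : ∀ t < n, ∃ r : Fin g, (((fun r : Fin g => (w (g - 1 - r) : ℤ)) -
      ∑ j : Fin m, Pi.single (f j) ((w (n - 1 - j) - s j : ℕ) : ℤ)) : Fin g → ℤ) r = t) (j : Fin m) :
    (f j : ℕ) = g - n + j := by
  set V : Fin g → ℤ := (fun r : Fin g => (w (g - 1 - r) : ℤ)) -
      ∑ j : Fin m, Pi.single (f j) ((w (n - 1 - j) - s j : ℕ) : ℤ) with hV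
  have hwinj : ∀ i j, i < g → j < g → w i = w j → i = j := by
    intro i j hi hj hij
    rcases lt_trichotomy i j with hlt | heq | hlt
    · exact absurd hij (hw i j hlt hj).ne
    · exact heq
    · exact absurd hij (hw j i hlt hi).ne'
  have hsinj : ∀ i j : Fin m, s i = s j → i = j := by
    intro i j hij
    rcases lt_trichotomy i j with hlt | heq | hlt
    · exact absurd hij (hs i j hlt j.2).ne
    · exact heq
    · exact absurd hij (hs j i hlt i.2).ne'
  have hVapp : ∀ r, V r = (w (g - 1 - r) : ℤ) -
      ∑ j : Fin m, if r = f j then ((w (n - 1 - j) - s j : ℕ) : ℤ) else 0 := by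
    intro r
    simp [hV, Finset.sum_apply, Pi.single_apply]
  have hVout : ∀ r, r ∉ Set.range f → V r = (w (g - 1 - r) : ℤ) := by
    intro r hr
    rw [hVapp, Finset.sum_eq_zero, sub_zero]
    exact fun j _ => if_neg fun e => hr ⟨j, e.symm⟩
  choose R hR using fun j : Fin m => h (s j) (hsn j j.2)
  have hRinj : Function.Injective R := fun i j hij =>
    hsinj i j (by have := hR i; rw [hij, hR j] at this; exact_mod_cast this.symm)
  have hRf : ∀ j, ∃ i, f i = R j := by
    intro j
    by_contra hc
    have h1 := hVout (R j) hc
    rw [hR j] at h1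
    have h2 : s j = w (g - 1 - R j) := by exact_mod_cast h1
    exact hsG j j.2 (h2 ▸ hwG _ (by have := (R j).2; omega))
  choose σ hσ using hRf
  have hσinj : Function.Injective σ := fun i j hij => hRinj (by rw [← hσ, ← hσ, hij])
  choose τ hτ using (Finite.injective_iff_surjective.1 hσinj)
  have hτinj : Function.Injective τ := fun i j hij => by rw [← hτ i, ← hτ j, hij]
  have hfR : ∀ i, f i = R (τ i) := fun i => by rw [← hσ, hτ]
  have hfinj : Function.Injective f := fun i j hij =>
    hτinj (hRinj (by rw [← hfR, ← hfR, hij]))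
  have hVf : ∀ i, V (f i) = s (τ i) := fun i => by rw [hfR, hR]
  have hVf' : ∀ i, w (g - 1 - f i) = (w (n - 1 - i) - s i) + s (τ i) := by
    intro i
    have h1 := hVapp (f i)
    rw [Finset.sum_eq_single i (fun j _ hj => if_neg fun e => hj (hfinj e).symm) (by simp),
      if_pos rfl, hVf] at h1
    omega
  have hfhigh : ∀ i, n ≤ w (g - 1 - f i) := by
    intro i
    by_contra! hlt
    obtain ⟨r, hr⟩ := h _ hlt
    have hi := (f i).2
    by_cases hrf : r ∈ Set.range f
    · obtain ⟨i', rfl⟩ := hrf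
      rw [hVf] at hr
      have h2 : s (τ i') = w (g - 1 - f i) := by exact_mod_cast hr
      exact hsG _ (τ i').2 (h2 ▸ hwG _ (by omega))
    · rw [hVout r hrf] at hr
      have h2 : g - 1 - r = g - 1 - f i :=
        hwinj _ _ (by omega) (by omega) (by exact_mod_cast hr)
      exact hrf ⟨i, Fin.ext (by have := r.2; omega)⟩
  have hge : ∀ i, n - m ≤ g - 1 - f i := fun i => by
    by_contra! hlt
    exact absurd (hlow _ hlt) (not_lt.2 (hfhigh i))
  have key : ∀ d, ∀ i : Fin m, m - 1 - i = d → g - 1 - f i = n - 1 - i ∧ τ i = i := by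
    intro d
    induction d using Nat.strong_induction_on with
    | _ d ih =>
      intro i hid
      have hi := i.2
      have ih' : ∀ i' : Fin m, i < i' → g - 1 - f i' = n - 1 - i' ∧ τ i' = i' := by
        intro i' hii'
        have : (i : ℕ) < i' := hii'
        exact ih (m - 1 - i') (by omega) i' rfl
      have hτi : τ i ≤ i := by
        by_contra! hlt
        exact hlt.ne (hτinj (ih' _ hlt).2).symm
      have hsτ : s (τ i) ≤ s i := by
        rcases hτi.lt_or_eq with hlt | heq
        · exact (hs _ _ hlt i.2).le
        · rw [heq]
      have hwi := hhigh (n - 1 - i) (by omega) (by omega)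
      have hsi := hsn i i.2
      have hwle : w (g - 1 - f i) ≤ w (n - 1 - i) := by
        have := hVf' i
        omega
      have hcle : g - 1 - f i ≤ n - 1 - i := by
        by_contra! hlt
        exact absurd (hw _ _ hlt (by have := (f i).2; omega)) (not_lt.2 hwle)
      have hceq : g - 1 - f i = n - 1 - i := by
        by_contra hne
        have hci := hge i
        have hlt : i < (⟨n - 1 - (g - 1 - f i), by omega⟩ : Fin m) := by
          rw [Fin.lt_def]
          dsimp only
          omega
        have h1 := (ih' _ hlt).1
        have h2 : f ⟨n - 1 - (g - 1 - f i), by omega⟩ = f i := by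
          apply Fin.ext
          have h3 := (f i).2
          have h4 := (f ⟨n - 1 - (g - 1 - f i), by omega⟩).2
          dsimp only at h1
          omega
        exact hlt.ne (hfinj h2).symm
      refine ⟨hceq, hsinj _ _ ?_⟩
      have := hVf' i
      rw [hceq] at this
      omega
  have h1 := (key _ j rfl).1
  have h2 := (f j).2
  have h3 := j.2
  omega

theorem wseq_eq_nth (G : Finset ℕ) (i : ℕ) : wseq G i = Nat.nth (· ∈ G) i := by
  have hfin : (Set.ofPred (· ∈ G)).Finite := G.finite_toSet
  rw [Nat.nth_eq_getD_sort hfin, wseq]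
  congr 2
  ext x
  simp

theorem toPowerSums_derivs_schur {g n k : ℕ} (G : Finset ℕ) (hcard : G.card = g)
    (hg : g = k + n) (m : ℕ) (hm : m = ((Finset.range n).filter (fun x => x ∉ G)).card)
    (a : ℕ → ℕ) (ha : ∀ j, a j = wseq G (n - j - 1) - wstar G j)
    (π : Equiv.Perm (Fin n))
    (hπ : ∀ j : Fin n, ((π j : ℕ)) =
      n - 1 - (if (j : ℕ) < m then wstar G j else wseq G (n - (j : ℕ) - 1))) :
    toPowerSums k (derivs ((List.range m).map a) (schur (fun a : Fin g => gapPart G g a))) =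
      ((Equiv.Perm.sign π : ℤ) : ℚ) • toPowerSums k (schur (fun a : Fin k => gapPart G g a)) := by
  have hfin : (Set.ofPred (· ∈ G)).Finite := G.finite_toSet
  have hfc : hfin.toFinset.card = g := by
    rw [← hcard]; congr 1; ext x; simp
  have hinf : (Set.ofPred (· ∉ G)).Infinite := G.finite_toSet.infinite_compl
  have hwlt : ∀ i j, i < j → j < g → wseq G i < wseq G j := by
    intro i j hij hj
    rw [wseq_eq_nth, wseq_eq_nth]
    exact Nat.nth_lt_nth_of_lt_card hfin hij (by rwa [hfc])
  have hwG : ∀ i < g, wseq G i ∈ G := by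
    intro i hi
    rw [wseq_eq_nth]
    exact Nat.nth_mem_of_lt_card hfin (by rwa [hfc])
  have hcm : Nat.count (· ∉ G) n = m := by rw [hm, Nat.count_eq_card_filter_range]
  have hcn : Nat.count (· ∈ G) n + m = n := by
    rw [hm, Nat.count_eq_card_filter_range, Finset.card_filter_add_card_filter_not,
      Finset.card_range]
  have hlow : ∀ i < n - m, wseq G i < n := by
    intro i hi
    rw [wseq_eq_nth]
    exact Nat.nth_lt_of_lt_count (by omega)
  have hhigh : ∀ i, n - m ≤ i → i < g → n ≤ wseq G i := by
    intro i hi hig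
    by_contra! hlt
    rw [wseq_eq_nth] at hlt
    have h1 := Nat.count_strict_mono (p := (· ∈ G)) (Nat.nth_mem_of_lt_card hfin
      (by rwa [hfc])) hlt
    rw [Nat.count_nth_of_lt_card_finite hfin (by rwa [hfc])] at h1
    omega
  have hile : ∀ i < g, i ≤ wseq G i := by
    intro i hi
    rw [wseq_eq_nth]
    exact Nat.le_nth fun _ => by rwa [hfc]
  have hs : ∀ i j, i < j → j < m → wstar G i < wstar G j := fun i j hij _ =>
    Nat.nth_strictMono hinf hij
  have hsn : ∀ j < m, wstar G j < n := fun j hj => Nat.nth_lt_of_lt_count (by rwa [hcm])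
  have hsG : ∀ j < m, wstar G j ∉ G := fun j _ => Nat.nth_mem_of_infinite hinf j
  have hapos : ∀ j < m, a j ≠ 0 := by
    intro j hj
    have h1 := hhigh (n - j - 1) (by omega) (by omega)
    have h2 := hsn j hj
    rw [ha]
    omega
  have hschur : schur (fun a : Fin g => gapPart G g a) =
      chargeDet fun r : Fin g => (wseq G (g - 1 - r) : ℤ) := by
    rw [schur_eq_chargeDet]
    congr 1
    ext r
    have h1 := hile (g - 1 - r) (by omega)
    have h2 := r.2
    unfold gapPart
    omega
  rw [toPowerSums_eq, toPowerSums_eq, hschur, derivs_range_chargeDet m a hapos, map_sum,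
    Finset.sum_eq_single (fun j : Fin m => (⟨k + j, by omega⟩ : Fin g))]
  · rw [← map_smul]
    congr 1
    subst hg
    refine chargeDet_eq_sign_smul (gapPart G (k + n)) π _ (fun b => ?_) fun j => ?_
    · rw [Pi.sub_apply, Finset.sum_apply, Finset.sum_eq_zero, sub_zero]
      · have h1 := hile (k + n - 1 - b) (by omega)
        have h2 := b.2
        unfold gapPart
        simp only [Fin.val_castAdd]
        omega
      · intro j _
        refine Pi.single_eq_of_ne ?_ _
        simp only [ne_eq, Fin.ext_iff, Fin.val_castAdd]
        omega
    · have h4 := hπ j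
      have hjn := j.2
      have e : k + n - 1 - (k + j) = n - j - 1 := by omega
      simp only [Pi.sub_apply, Finset.sum_apply, Pi.single_apply, Fin.ext_iff, Fin.val_natAdd,
        add_right_inj, e]
      by_cases hj : (j : ℕ) < m
      · rw [Finset.sum_eq_single (⟨j, hj⟩ : Fin m)
          (fun b _ hb => if_neg fun e => hb (Fin.ext e.symm)) (by simp), if_pos rfl, ha]
        rw [if_pos hj] at h4
        have h1 := hhigh (n - j - 1) (by omega) (by omega)
        have h2 := hsn j hj
        dsimp only
        omega
      · rw [Finset.sum_eq_zero fun b _ => if_neg (by have := b.2; omega)]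
        rw [if_neg hj] at h4
        have h1 := hlow (n - j - 1) (by omega)
        omega
  · intro f _ hf
    by_contra hne
    apply hf
    have hatt : ∀ t < n, ∃ r : Fin g, (((fun r : Fin g => (wseq G (g - 1 - r) : ℤ)) -
        ∑ j : Fin m, Pi.single (f j) ((wseq G (n - 1 - j) - wstar G j : ℕ) : ℤ)) : Fin g → ℤ) r = t := by
      intro t ht
      by_contra! hc
      apply hne
      refine toPowerSumsHom_chargeDet_eq_zero (r := t) (by omega) _ fun r => ?_
      have := hc r
      simpa only [ha, Nat.sub_right_comm] using this
    ext j
    have := row_eq_of_forall_lt_attained G (wseq G) (wstar G) (by omega) (by omega) hwlt hwG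
      hlow hhigh hs hsn hsG f hatt j
    dsimp only
    omega
  · simp

/-- Let `λ` be the partition associated to a gap sequence `G` of genus `g`
and `0 ≤ k ≤ g`. Then `∂_{a^{(k)}_1} ⋯ ∂_{a^{(k)}_{m_k}} s_λ`, evaluated at
`t = [x_1]+⋯+[x_k]`, equals `c_k · s_{(λ_1,...,λ_k)}([x_1]+⋯+[x_k])`, where `c_k` is the
sign of the permutation `π` of `{0, ..., g-k-1}` determined by the tuple
`v = (w_1^*, ..., w_{m_k}^*, w_{g-k-m_k}, ..., w_1)` via `π j = g-k-1 - v_j`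
(so that `c_k = sgn( v over (g-k-1, ..., 1, 0) )`), and `c_g = 1` (empty permutation) with
the empty derivative for `k = g`. -/
theorem statement8 (g : ℕ) (hg : 1 ≤ g) (G : Finset ℕ)
    (hcard : G.card = g) (h0 : 0 ∉ G)
    (hadd : ∀ a b : ℕ, a ∉ G → b ∉ G → a + b ∉ G)
    (k : ℕ) (hk : k ≤ g)
    (π : Equiv.Perm (Fin (g - k)))
    (hπ : ∀ j : Fin (g - k), ((π j : ℕ))
        = g - k - 1 - (if (j : ℕ) < gapm G g k then wstar G j
            else wseq G (g - k - (j : ℕ) - 1))) :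
    toPowerSums k (derivs ((List.range (gapm G g k)).map (gapa G g k))
        (schur (fun a : Fin g => gapPart G g a)))
      = ((Equiv.Perm.sign π : ℤ) : ℚ)
          • toPowerSums k (schur (fun a : Fin k => gapPart G g a)) := by
  exact toPowerSums_derivs_schur G hcard (by omega) _ rfl _ (fun _ => rfl) π hπ
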